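/- Let f = η^4 on the upper half-plane. Then for every τ ∈ ℍ, the Schwarzian of any primitive of f satisfies (d/dτ)(f'(τ)/f(τ)) − (1/2)(f'(τ)/f(τ))² = (π²/18) E4(τ); in other words, any holomorphic h with h' = η^4 satisfies the Schwarz differential equation {h, τ} = 2 (π²/36) E4(τ). -/

import Mathlib

/-!
The logarithmic derivative of `η` is `(πi/12) E₂`, so the Schwarzian of a primitive of `η ^ n` is a
combination of `E₂'` and `E₂²`. Ramanujan's identity `D E₂ = (E₂² - E₄) / 12`, where
`D = (2πi)⁻¹ d/dτ`, turns it into a combination of `E₄` and `E₂²`, and the coefficient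
`n (n - 4) π² / 288` of `E₂²` vanishes for `n = 4`.

For Ramanujan's identity, the anomaly in the transformation law of `E₂` makes `D E₂ - E₂² / 12`
invariant in weight `4`. Its value at `i∞` is `-1/12`, so its sum with `E₄ / 12` is a cusp form of
weight `4 < 12`, hence zero.
-/

open Complex Filter Topology

noncomputable section

/-- The nome `q = e^{2πiτ}`. -/
def qq (τ : ℂ) : ℂ := Complex.exp (2 * Real.pi * Complex.I * τ)

/-- The Eisenstein series `E₄(τ) = 1 + 240 Σ_{n≥1} σ₃(n) qⁿ`. -/
def E4 (τ : ℂ) : ℂ := 1 + 240 * ∑' n : ℕ, (∑ d ∈ (n + 1).divisors, (d : ℂ) ^ 3) * qq τ ^ (n + 1)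

/-- The Eisenstein series `E₆(τ) = 1 − 504 Σ_{n≥1} σ₅(n) qⁿ`. -/
def E6 (τ : ℂ) : ℂ := 1 - 504 * ∑' n : ℕ, (∑ d ∈ (n + 1).divisors, (d : ℂ) ^ 5) * qq τ ^ (n + 1)

/-- The normalized elliptic modular function `J = E₄³ / (E₄³ − E₆²)`. -/
def J (τ : ℂ) : ℂ := E4 τ ^ 3 / (E4 τ ^ 3 - E6 τ ^ 2)

/-- The Dedekind eta function `η(τ) = e^{πiτ/12} ∏_{n≥1} (1 − qⁿ)`. -/
def dedekindEta (τ : ℂ) : ℂ := Complex.exp (Real.pi * Complex.I * τ / 12) * ∏' n : ℕ, (1 - qq τ ^ (n + 1))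

/-- The elliptic point `ρ = e^{2πi/3}`. -/
def rho : ℂ := Complex.exp (2 * Real.pi * Complex.I / 3)

open UpperHalfPlane hiding I im neg_smul
open EisensteinSeries Derivative ModularForm Function
open scoped Manifold MatrixGroups

lemma eventually_closedBall_subset_of_mem_comap_im {s : Set ℂ} (hs : s ∈ comap im atTop) (r : ℝ) :
    ∀ᶠ z in comap im atTop, Metric.closedBall z r ⊆ s := by
  obtain ⟨A, hA⟩ := eventually_atTop.mp (eventually_comap.mp (eventually_mem_set.mpr hs))
  filter_upwards [preimage_mem_comap (Ici_mem_atTop (A + r))] with z hz w hw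
  have hdist : |(w - z).im| ≤ r := (abs_im_le_norm _).trans (mem_closedBall_iff_norm.mp hw)
  have hz : A + r ≤ z.im := hz
  rw [sub_im] at hdist
  exact hA w.im (by linarith [(abs_le.mp hdist).1]) w rfl

lemma tendsto_deriv_comap_im_atTop {F : Type*} [NormedAddCommGroup F] [NormedSpace ℂ F]
    {f : ℂ → F} {c : F} (hd : ∀ᶠ z in comap im atTop, DifferentiableAt ℂ f z)
    (hlim : Tendsto f (comap im atTop) (𝓝 c)) :
    Tendsto (deriv f) (comap im atTop) (𝓝 0) := by
  refine Metric.nhds_basis_closedBall.tendsto_right_iff.mpr fun ε hε ↦ ?_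
  have hclose := Metric.nhds_basis_closedBall.tendsto_right_iff.mp hlim ε hε
  filter_upwards [eventually_closedBall_subset_of_mem_comap_im (hd.and hclose) 1] with z hz
  have hdiff : DiffContOnCl ℂ (fun w ↦ f w - c) (Metric.ball z 1) := by
    refine DifferentiableOn.diffContOnCl fun w hw ↦ ?_
    rw [closure_ball z one_ne_zero] at hw
    exact ((hz hw).1.sub_const c).differentiableWithinAt
  have hCauchy := norm_deriv_le_of_forall_mem_sphere_norm_le one_pos hdiff fun w hw ↦
    mem_closedBall_iff_norm.mp (hz (Metric.sphere_subset_closedBall hw)).2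
  simpa using hCauchy

lemma isZeroAtImInfty_normalizedDerivOfComplex {f : ℍ → ℂ} (hf : MDiff f) {c : ℂ}
    (hlim : Tendsto f atImInfty (𝓝 c)) : IsZeroAtImInfty (D f) := by
  have hd : ∀ᶠ z in comap im atTop, DifferentiableAt ℂ (f ∘ ofComplex) z := by
    filter_upwards [preimage_mem_comap (Ioi_mem_atTop 0)] with z hz
    exact UpperHalfPlane.mdifferentiableAt_iff.mp (hf ⟨z, hz⟩)
  have hderiv := (tendsto_deriv_comap_im_atTop hd (hlim.comp tendsto_comap_im_ofComplex)).comp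
    tendsto_coe_atImInfty
  have hscaled := hderiv.const_mul (2 * Real.pi * I)⁻¹
  rwa [mul_zero] at hscaled

lemma tendsto_atImInfty_of_hasSum_qExpansion {h : ℝ} (hh : 0 < h) {f : ℍ → ℂ} {c : ℕ → ℂ}
    (hf : ∀ z : ℍ, HasSum (fun m ↦ c m • Periodic.qParam h z ^ m) (f z)) :
    Tendsto f atImInfty (𝓝 (c 0)) := by
  have hq : Tendsto (fun z : ℍ ↦ Periodic.qParam h z) atImInfty (𝓝 0) :=
    qParam_tendsto_atImInfty hh
  have hI : 0 < ‖Periodic.qParam h UpperHalfPlane.I‖ :=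
    norm_pos_iff.mpr (Periodic.qParam_ne_zero _)
  have hdom : ∀ᶠ z : ℍ in atImInfty, ∀ m,
      ‖c m • Periodic.qParam h z ^ m‖ ≤ ‖c m • Periodic.qParam h UpperHalfPlane.I ^ m‖ := by
    filter_upwards [(tendsto_zero_iff_norm_tendsto_zero.mp hq).eventually_lt_const hI] with z hz m
    simp only [norm_smul, norm_pow]
    gcongr
  have hlim := tendsto_tsum_of_dominated_convergence (hf UpperHalfPlane.I).summable.norm
    (fun m ↦ (hq.pow m).const_smul (c m)) hdom
  rw [tsum_eq_single 0 (by simp +contextual)] at hlim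
  simp_rw [(hf _).tsum_eq] at hlim
  simpa using hlim

lemma tendsto_E2_atImInfty : Tendsto E2 atImInfty (𝓝 1) := by
  simpa using tendsto_atImInfty_of_hasSum_qExpansion one_pos
    (c := fun m ↦ if m = 0 then 1 else -24 * ArithmeticFunction.sigma 1 m) fun z ↦ by
      simpa only [Periodic.qParam, ofReal_one, div_one] using hasSum_qExpansion_E2 (z := z)

lemma tendsto_E_atImInfty {k : ℕ} (hk : 3 ≤ k) (hk2 : Even k) :
    Tendsto (E hk) atImInfty (𝓝 1) := by
  rw [← E_qExpansion_coeff_zero hk hk2]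
  exact tendsto_atImInfty_of_hasSum_qExpansion one_pos
    fun z ↦ ModularForm.hasSum_qExpansion (f := E hk) one_pos one_mem_strictPeriods_SL z

lemma eq_zero_of_slash_eq_of_isZeroAtImInfty {k : ℤ} (hk : k < 12) {f : ℍ → ℂ} (hf : MDiff f)
    (hslash : ∀ γ : SL(2, ℤ), f ∣[k] γ = f) (hzero : IsZeroAtImInfty f) : f = 0 := by
  let g : CuspForm 𝒮ℒ k :=
    { toFun := f
      slash_action_eq' := by
        rintro _ ⟨γ, rfl⟩
        exact hslash γ
      holo' := hf
      zero_at_cusps' := fun hc ↦ by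
        rw [Subgroup.IsArithmetic.isCusp_iff_isCusp_SL2Z] at hc
        exact (OnePoint.isZeroAt_iff_forall_SL2Z hc).mpr fun γ _ ↦ (hslash γ).symm ▸ hzero }
  have hg : g = 0 := rank_zero_iff_forall_zero.mp (CuspForm.rank_eq_zero_of_weight_lt_twelve hk) g
  exact congrArg DFunLike.coe hg

lemma hasDerivAt_D2_comp_ofComplex (γ : SL(2, ℤ)) (z : ℍ) :
    HasDerivAt (D2 γ ∘ ofComplex) (-(2 * Real.pi * I * γ 1 0 ^ 2) / denom γ z ^ 2) z := by
  have hden := (hasDerivAt_denom_zpow (γ : GL (Fin 2) ℝ) (-1) z).const_mul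
    (2 * Real.pi * I * γ 1 0)
  refine (hden.congr_of_eventuallyEq ?_).congr_deriv ?_
  · filter_upwards [isOpen_upperHalfPlaneSet.mem_nhds z.im_pos] with w hw
    simp [D2, ofComplex_apply_of_im_pos hw, div_eq_mul_inv]
  · norm_num [zpow_neg]
    ring

lemma mdifferentiable_D2 (γ : SL(2, ℤ)) : MDiff (D2 γ) := fun z ↦
  UpperHalfPlane.mdifferentiableAt_iff.mpr (hasDerivAt_D2_comp_ofComplex γ z).differentiableAt

lemma normalizedDerivOfComplex_D2 (γ : SL(2, ℤ)) :
    D (D2 γ) = (4 * Real.pi ^ 2 : ℂ)⁻¹ • D2 γ ^ 2 := by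
  ext z
  have hz := denom_ne_zero (γ : GL (Fin 2) ℝ) z
  simp only [normalizedDerivOfComplex, (hasDerivAt_D2_comp_ofComplex γ z).deriv, Pi.smul_apply,
    Pi.pow_apply, D2, smul_eq_mul]
  field_simp
  simp only [I_sq]
  ring

lemma serreDerivative_one_eq_add (f : ℍ → ℂ) :
    serreDerivative 1 f = serreDerivative 2 f + (12⁻¹ : ℂ) • (E2 * f) := by
  ext z
  simp only [serreDerivative_apply, Pi.add_apply, Pi.smul_apply, Pi.mul_apply, smul_eq_mul]
  ring

-- `E2` has weight 2, yet its weight-1 Serre derivative is the modular one: the anomaly `D2 γ`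
-- satisfies the Riccati equation `normalizedDerivOfComplex_D2`, and its square cancels.
lemma serreDerivative_one_E2_slash (γ : SL(2, ℤ)) :
    serreDerivative 1 E2 ∣[(4 : ℤ)] γ = serreDerivative 1 E2 := by
  have hserre : serreDerivative 2 E2 ∣[(4 : ℤ)] γ =
      serreDerivative 2 (E2 - (1 / (2 * riemannZeta 2)) • D2 γ) := by
    rw [← E2_slash_action]
    exact serreDerivative_slash_equivariant (k := 2) E2_mdifferentiable
  have hsq : (E2 * E2) ∣[(4 : ℤ)] γ = (E2 ∣[(2 : ℤ)] γ) * (E2 ∣[(2 : ℤ)] γ) :=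
    mul_slash_SL2 2 2 γ E2 E2
  rw [serreDerivative_one_eq_add, SlashAction.add_slash, SL_smul_slash, hserre, hsq,
    E2_slash_action, serreDerivative_sub _ _ _ E2_mdifferentiable
      ((mdifferentiable_D2 γ).const_smul _), serreDerivative_smul _ _ _ (mdifferentiable_D2 γ)]
  ext z
  simp only [Pi.add_apply, Pi.sub_apply, Pi.smul_apply, Pi.mul_apply, Pi.pow_apply, smul_eq_mul,
    serreDerivative_apply, normalizedDerivOfComplex_D2, riemannZeta_two]
  field_simp
  ring

theorem serreDerivative_one_E2 : serreDerivative 1 E2 = -(12⁻¹ : ℂ) • ⇑E₄ := by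
  have hlim : IsZeroAtImInfty (serreDerivative 1 E2 + (12⁻¹ : ℂ) • ⇑E₄) := by
    have hD := isZeroAtImInfty_normalizedDerivOfComplex E2_mdifferentiable tendsto_E2_atImInfty
    have hE2 := (tendsto_E2_atImInfty.const_mul (1 * 12⁻¹)).mul tendsto_E2_atImInfty
    have hE₄ := (tendsto_E_atImInfty (by norm_num : 3 ≤ 4) ⟨2, rfl⟩).const_smul (12⁻¹ : ℂ)
    have hsum := (Tendsto.sub hD hE2).add hE₄
    rwa [show (0 - 1 * 12⁻¹ * 1 * 1 + (12⁻¹ : ℂ) • (1 : ℂ)) = 0 by norm_num] at hsum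
  have hmdiff : MDiff (serreDerivative 1 E2 + (12⁻¹ : ℂ) • ⇑E₄) :=
    (serreDerivative_mdifferentiable 1 E2_mdifferentiable).add (E₄.holo'.const_smul _)
  have hslash (γ : SL(2, ℤ)) : (serreDerivative 1 E2 + (12⁻¹ : ℂ) • ⇑E₄) ∣[(4 : ℤ)] γ =
      serreDerivative 1 E2 + (12⁻¹ : ℂ) • ⇑E₄ := by
    rw [SlashAction.add_slash, SL_smul_slash, serreDerivative_one_E2_slash,
      show ⇑E₄ ∣[(4 : ℤ)] γ = ⇑E₄ from E₄.slash_action_eq' _ ⟨γ, rfl⟩]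
  rw [neg_smul]
  exact eq_neg_of_add_eq_zero_left
    (eq_zero_of_slash_eq_of_isZeroAtImInfty (by norm_num) hmdiff hslash hlim)

lemma deriv_E2_comp_ofComplex (z : ℍ) :
    deriv (E2 ∘ ofComplex) z = Real.pi * I / 6 * (E2 z ^ 2 - E₄ z) := by
  have hR : D E2 z - 1 * 12⁻¹ * E2 z * E2 z = -12⁻¹ * E₄ z := congrFun serreDerivative_one_E2 z
  have hderiv : deriv (E2 ∘ ofComplex) z = 2 * Real.pi * I * D E2 z := by
    rw [normalizedDerivOfComplex, mul_inv_cancel_left₀ two_pi_I_ne_zero]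
  rw [hderiv]
  linear_combination 2 * Real.pi * I * hR

lemma E4_coe_eq_E₄ (z : ℍ) : E4 z = E₄ z := by
  rw [E4, EisensteinSeries.q_expansion_bernoulli _ ⟨2, rfl⟩]
  simp_rw [zpow_natCast]
  rw [tsum_pnat_eq_tsum_succ
    (f := fun n ↦ (ArithmeticFunction.sigma (4 - 1) n : ℂ) * cexp (2 * Real.pi * I * z) ^ n)]
  have hB : bernoulli 4 = -1 / 30 := by norm_num [bernoulli, bernoulli']
  norm_num [hB, qq, ArithmeticFunction.sigma_apply]

lemma dedekindEta_eq_eta : dedekindEta = ModularForm.eta := by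
  ext z
  simp only [dedekindEta, ModularForm.eta, eta_q_eq_pow, qq, Periodic.qParam]
  congr 2
  push_cast
  ring

lemma logDeriv_dedekindEta_eventuallyEq (τ : ℍ) :
    logDeriv dedekindEta =ᶠ[𝓝 (τ : ℂ)] fun z ↦ Real.pi * I / 12 * (E2 ∘ ofComplex) z := by
  filter_upwards [isOpen_upperHalfPlaneSet.mem_nhds τ.im_pos] with z hz
  rw [dedekindEta_eq_eta, comp_apply, ofComplex_apply_of_im_pos hz]
  exact logDeriv_eta_eq_E2 ⟨z, hz⟩

lemma deriv_logDeriv_dedekindEta (τ : ℍ) :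
    deriv (logDeriv dedekindEta) τ = -(Real.pi ^ 2 / 72) * (E2 τ ^ 2 - E₄ τ) := by
  rw [(logDeriv_dedekindEta_eventuallyEq τ).deriv_eq, deriv_const_mul_field,
    deriv_E2_comp_ofComplex]
  linear_combination Real.pi ^ 2 / 72 * (E2 τ ^ 2 - E₄ τ) * I_sq

/-- The Schwarzian derivative `{h, z} = (h''/h')' - (h''/h')² / 2` of any primitive `h` of `f`,
expressed through `f = h'` so that no primitive has to be chosen. -/
def schwarzianOfDeriv (f : ℂ → ℂ) (z : ℂ) : ℂ :=
  deriv (logDeriv f) z - 1 / 2 * logDeriv f z ^ 2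

lemma schwarzianOfDeriv_zpow {f : ℂ → ℂ} {z : ℂ} (hf : ∀ᶠ w in 𝓝 z, DifferentiableAt ℂ f w)
    (n : ℤ) : schwarzianOfDeriv (fun w ↦ f w ^ n) z =
      n * deriv (logDeriv f) z - n ^ 2 / 2 * logDeriv f z ^ 2 := by
  have hlog : logDeriv (fun w ↦ f w ^ n) =ᶠ[𝓝 z] fun w ↦ n * logDeriv f w :=
    hf.mono fun _ hw ↦ logDeriv_fun_zpow hw n
  rw [schwarzianOfDeriv, hlog.deriv_eq, hlog.eq_of_nhds, deriv_const_mul_field]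
  ring

theorem schwarzianOfDeriv_dedekindEta_zpow (n : ℤ) (τ : ℍ) :
    schwarzianOfDeriv (fun w ↦ dedekindEta w ^ n) τ =
      n * Real.pi ^ 2 / 72 * E₄ τ + n * (n - 4) * Real.pi ^ 2 / 288 * E2 τ ^ 2 := by
  have hdiff : ∀ᶠ w in 𝓝 (τ : ℂ), DifferentiableAt ℂ dedekindEta w := by
    filter_upwards [isOpen_upperHalfPlaneSet.mem_nhds τ.im_pos] with w hw
    exact dedekindEta_eq_eta ▸ differentiableAt_eta_of_mem_upperHalfPlaneSet hw
  rw [schwarzianOfDeriv_zpow hdiff, deriv_logDeriv_dedekindEta,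
    (logDeriv_dedekindEta_eventuallyEq τ).eq_of_nhds, comp_apply, ofComplex_apply]
  linear_combination -(n ^ 2 * Real.pi ^ 2 / 288 * E2 τ ^ 2) * I_sq

/-- Any primitive `h` of `f = η⁴` satisfies the Schwarz equation
`{h,τ} = (f'/f)' − (1/2)(f'/f)² = 2·(π²/36)·E₄(τ)` on the upper half-plane. -/
theorem schwarzian_eta_four (τ : ℂ) (hτ : 0 < τ.im) :
    deriv (fun z : ℂ => deriv (fun w : ℂ => dedekindEta w ^ 4) z / dedekindEta z ^ 4) τ -
      1 / 2 * (deriv (fun w : ℂ => dedekindEta w ^ 4) τ / dedekindEta τ ^ 4) ^ 2 =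
      (Real.pi : ℂ) ^ 2 / 18 * E4 τ := by
  have h := schwarzianOfDeriv_dedekindEta_zpow 4 ⟨τ, hτ⟩
  rw [← E4_coe_eq_E₄] at h
  calc
    _ = schwarzianOfDeriv (fun w ↦ dedekindEta w ^ (4 : ℤ)) τ := rfl
    _ = Real.pi ^ 2 / 18 * E4 τ := by
      rw [h]
      push_cast
      ring
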